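/- For every point $m$ in the open unit ball model of $\mathbb{H}^{n+1}$, the integral of the Poisson kernel at exponent $n$ over the boundary sphere equals the volume of the sphere: $\int_{S^n} \big(\frac{1-|m|^2}{|m-\xi|^2}\big)^n d\xi = \mathrm{vol}(S^n)$, where $d\xi$ is the standard surface measure on $S^n$. -/

import Mathlib

noncomputable section

open MeasureTheory

section LorentzBoost

open Set Metric Module
open scoped ENNReal RealInnerProductSpace

variable {E : Type*} [NormedAddCommGroup E] [InnerProductSpace ℝ E]

/-- The time component of the image of the light-cone point `(x, ‖x‖)` under the Lorentz boost
whose time row is `(w, c)`. -/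
def boostTime (c : ℝ) (w x : E) : ℝ := c * ‖x‖ + ⟪w, x⟫

/-- The space component of the image of the light-cone point `(x, ‖x‖)` under the Lorentz boost
whose time row is `(w, c)`. -/
def boostSpace (c : ℝ) (w x : E) : E := x + (‖x‖ + ⟪w, x⟫ / (c + 1)) • w

@[fun_prop]
lemma continuous_boostTime (c : ℝ) (w : E) : Continuous (boostTime c w) := by
  unfold boostTime
  fun_prop

variable {c : ℝ} {w : E}

lemma boostTime_smul {r : ℝ} (hr : 0 ≤ r) (x : E) :
    boostTime c w (r • x) = r * boostTime c w x := by
  simp only [boostTime, norm_smul, inner_smul_right, Real.norm_of_nonneg hr]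
  ring

lemma boostTime_pos (hc : 1 ≤ c) (hw : ‖w‖ ^ 2 = c ^ 2 - 1) {x : E} (hx : x ≠ 0) :
    0 < boostTime c w x := by
  have h : ‖w‖ < c := by nlinarith [norm_nonneg w]
  have h₁ := neg_le_of_abs_le (abs_real_inner_le_norm w x)
  have h₂ := mul_lt_mul_of_pos_right h (norm_pos_iff.2 hx)
  unfold boostTime
  linarith

lemma boostTime_nonneg (hc : 1 ≤ c) (hw : ‖w‖ ^ 2 = c ^ 2 - 1) (x : E) :
    0 ≤ boostTime c w x := by
  rcases eq_or_ne x 0 with rfl | hx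
  · simp [boostTime]
  · exact (boostTime_pos hc hw hx).le

lemma norm_boostSpace (hc : 1 ≤ c) (hw : ‖w‖ ^ 2 = c ^ 2 - 1) (x : E) :
    ‖boostSpace c w x‖ = boostTime c w x := by
  refine (sq_eq_sq₀ (norm_nonneg _) (boostTime_nonneg hc hw x)).1 ?_
  have hc' : c + 1 ≠ 0 := by positivity
  rw [boostSpace, norm_add_sq_real, norm_smul, mul_pow, hw, inner_smul_right,
    real_inner_comm w x, Real.norm_eq_abs, sq_abs, boostTime]
  field_simp
  ring

lemma boostSpace_neg_boostSpace (hc : 1 ≤ c) (hw : ‖w‖ ^ 2 = c ^ 2 - 1) (x : E) :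
    boostSpace c (-w) (boostSpace c w x) = x := by
  have hc' : c + 1 ≠ 0 := by positivity
  have h : ‖boostSpace c w x‖ + ⟪-w, boostSpace c w x⟫ / (c + 1)
      = ‖x‖ + ⟪w, x⟫ / (c + 1) := by
    rw [norm_boostSpace hc hw, boostTime, boostSpace, inner_neg_left, inner_add_right,
      inner_smul_right, real_inner_self_eq_norm_sq, hw]
    field_simp
    ring
  rw [boostSpace, h, boostSpace]
  simp

lemma boostSpace_boostSpace_neg (hc : 1 ≤ c) (hw : ‖w‖ ^ 2 = c ^ 2 - 1) (x : E) :
    boostSpace c w (boostSpace c (-w) x) = x := by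
  simpa using boostSpace_neg_boostSpace (w := -w) hc (by simpa using hw) x

lemma image_boostSpace (hc : 1 ≤ c) (hw : ‖w‖ ^ 2 = c ^ 2 - 1) :
    boostSpace c w '' ({x | boostTime c w x < 1} ∩ {0}ᶜ) = ball 0 1 \ {0} := by
  have h₀ (v : E) : boostSpace c v 0 = 0 := by simp [boostSpace]
  ext y
  constructor
  · rintro ⟨x, ⟨hx, hx₀⟩, rfl⟩
    refine ⟨by simpa [norm_boostSpace hc hw] using hx, fun h ↦ hx₀ ?_⟩
    rw [mem_singleton_iff] at h ⊢
    rw [← boostSpace_neg_boostSpace hc hw x, h, h₀]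
  · rintro ⟨hy, hy₀⟩
    refine ⟨boostSpace c (-w) y, ⟨?_, fun h ↦ hy₀ ?_⟩, boostSpace_boostSpace_neg hc hw y⟩
    · rw [mem_ofPred_eq, ← norm_boostSpace hc hw, boostSpace_boostSpace_neg hc hw]
      simpa using hy
    · rw [mem_singleton_iff] at h ⊢
      rw [← boostSpace_boostSpace_neg hc hw y, h, h₀]

lemma hasFDerivAt_norm_of_ne_zero {x : E} (hx : x ≠ 0) :
    HasFDerivAt (fun y : E ↦ ‖y‖) (‖x‖⁻¹ • innerSL ℝ x) x := by
  have h := (hasStrictFDerivAt_norm_sq x).hasFDerivAt.sqrt (by simpa using hx)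
  simp only [Real.sqrt_sq (norm_nonneg _)] at h
  convert h using 1
  ext y
  simp
  field_simp

lemma hasFDerivAt_boostSpace {x : E} (hx : x ≠ 0) :
    HasFDerivAt (boostSpace c w)
      (ContinuousLinearMap.id ℝ E +
        (‖x‖⁻¹ • innerSL ℝ x + (c + 1)⁻¹ • innerSL ℝ w).smulRight w) x := by
  have h := ((hasFDerivAt_norm_of_ne_zero hx).add
    ((innerSL ℝ w).hasFDerivAt.const_smul (c + 1)⁻¹)).smul_const w
  refine ((hasFDerivAt_id x).add h).congr_of_eventuallyEq (.of_forall fun y ↦ ?_)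
  simp [boostSpace, div_eq_inv_mul]

lemma det_fderiv_boostSpace [FiniteDimensional ℝ E] (hc : 1 ≤ c) (hw : ‖w‖ ^ 2 = c ^ 2 - 1)
    {x : E} (hx : x ≠ 0) :
    (ContinuousLinearMap.id ℝ E +
        (‖x‖⁻¹ • innerSL ℝ x + (c + 1)⁻¹ • innerSL ℝ w).smulRight w).det
      = boostTime c w x / ‖x‖ := by
  have hc' : c + 1 ≠ 0 := by positivity
  have hx' := norm_ne_zero_iff.2 hx
  set f : E →L[ℝ] ℝ := ‖x‖⁻¹ • innerSL ℝ x + (c + 1)⁻¹ • innerSL ℝ w with hf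
  have h : ((ContinuousLinearMap.id ℝ E + f.smulRight w : E →L[ℝ] E) : E →ₗ[ℝ] E)
      = LinearMap.transvection (f : E →ₗ[ℝ] ℝ) w := by
    ext y
    simp [LinearMap.transvection.apply]
  rw [ContinuousLinearMap.det, h, LinearMap.transvection.det]
  simp only [hf, ContinuousLinearMap.coe_coe, add_apply, smul_apply,
    innerSL_apply_apply, real_inner_self_eq_norm_sq, hw, boostTime, smul_eq_mul,
    real_inner_comm w x]
  field_simp
  ring

variable [FiniteDimensional ℝ E] [MeasurableSpace E] [BorelSpace E]
  (μ : Measure E) [μ.IsAddHaarMeasure]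

/-- Integration in polar coordinates. -/
lemma setLIntegral_compl_zero_eq_lintegral_toSphere {f : E → ℝ≥0∞} (hf : Measurable f) :
    ∫⁻ x in {0}ᶜ, f x ∂μ = ∫⁻ ξ : sphere (0 : E) 1, ∫⁻ r : Ioi (0 : ℝ),
      f (r.1 • ξ.1) ∂Measure.volumeIoiPow (finrank ℝ E - 1) ∂μ.toSphere := by
  have hg : Measurable fun p : sphere (0 : E) 1 × Ioi (0 : ℝ) ↦ f (p.2.1 • p.1.1) := by
    refine hf.comp (Continuous.measurable ?_)
    fun_prop
  rw [← lintegral_prod _ hg.aemeasurable,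
    ← μ.measurePreserving_homeomorphUnitSphereProd.lintegral_comp hg,
    ← lintegral_subtype_comap (measurableSet_singleton _).compl]
  refine lintegral_congr fun x ↦ ?_
  have h : ‖x.1‖ ≠ 0 := norm_ne_zero_iff.2 x.2
  simp [smul_smul, h]

theorem lintegral_inv_boostTime_pow_toSphere (hc : 1 ≤ c) (hw : ‖w‖ ^ 2 = c ^ 2 - 1) :
    ∫⁻ ξ : sphere (0 : E) 1, ENNReal.ofReal ((boostTime c w ξ.1)⁻¹ ^ (finrank ℝ E - 1))
      ∂μ.toSphere = μ.toSphere univ := by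
  rcases subsingleton_or_nontrivial E with hE | hE
  · simp [μ.toSphere_eq_zero_iff.2 hE]
  have hd : 0 < finrank ℝ E := finrank_pos
  have hs : MeasurableSet {x | boostTime c w x < 1} :=
    measurableSet_lt (by fun_prop) measurable_const
  have hpolar : μ (ball 0 1 \ {0}) = ∫⁻ ξ : sphere (0 : E) 1,
      ENNReal.ofReal ((boostTime c w ξ.1)⁻¹ ^ (finrank ℝ E - 1) / finrank ℝ E) ∂μ.toSphere := by
    rw [← image_boostSpace hc hw, ← lintegral_abs_det_fderiv_eq_addHaar_image μ
      (hs.inter (measurableSet_singleton _).compl)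
      (fun x hx ↦ (hasFDerivAt_boostSpace hx.2).hasFDerivWithinAt)
      (Function.LeftInverse.injective (boostSpace_neg_boostSpace hc hw)).injOn,
      setLIntegral_congr_fun (g := fun x ↦ ENNReal.ofReal (boostTime c w x / ‖x‖))
      (hs.inter (measurableSet_singleton _).compl) (fun x hx ↦ by
        dsimp only
        rw [det_fderiv_boostSpace hc hw hx.2, abs_of_nonneg
          (div_nonneg (boostTime_nonneg hc hw x) (norm_nonneg x))]),
      ← Measure.restrict_restrict hs, ← lintegral_indicator hs,
      setLIntegral_compl_zero_eq_lintegral_toSphere μ (by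
        refine Measurable.indicator ?_ hs
        exact ENNReal.measurable_ofReal.comp (by fun_prop))]
    refine lintegral_congr fun ξ ↦ ?_
    have hξ : ‖ξ.1‖ = 1 := by simp
    have hρ : 0 < boostTime c w ξ.1 :=
      boostTime_pos hc hw (norm_ne_zero_iff.1 (by simp [hξ]))
    calc
      _ = ∫⁻ r : Ioi (0 : ℝ), (Iio ⟨(boostTime c w ξ.1)⁻¹, inv_pos.2 hρ⟩).indicator
          (fun _ ↦ ENNReal.ofReal (boostTime c w ξ.1)) r
          ∂Measure.volumeIoiPow (finrank ℝ E - 1) := by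
        refine lintegral_congr fun r ↦ ?_
        have hr : 0 < r.1 := r.2
        simp only [indicator_apply, mem_ofPred_eq, mem_Iio, ← Subtype.coe_lt_coe,
          boostTime_smul hr.le, ← one_div, lt_div_iff₀ hρ, norm_smul, hξ, mul_one,
          Real.norm_of_nonneg hr.le, mul_div_cancel_left₀ _ hr.ne']
      _ = _ := by
        rw [lintegral_indicator_const measurableSet_Iio, Measure.volumeIoiPow_apply_Iio,
          ← ENNReal.ofReal_mul hρ.le, Nat.cast_pred hd, sub_add_cancel, pow_succ]
        congr 1
        field_simp
  rw [μ.toSphere_apply_univ', hpolar, ← lintegral_const_mul' _ _ (ENNReal.natCast_ne_top _)]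
  refine lintegral_congr fun ξ ↦ ?_
  rw [← ENNReal.ofReal_natCast, ← ENNReal.ofReal_mul (Nat.cast_nonneg _),
    mul_div_cancel₀ _ (Nat.cast_ne_zero.2 hd.ne')]

end LorentzBoost

/-- The integral over the unit sphere `Sⁿ ⊂ ℝ^{n+1}` (with its standard surface
measure, realized as `volume.toSphere`) of the Poisson kernel
`((1-|m|²)/|m-ξ|²)^n` equals the total surface measure `vol(Sⁿ)`, for every point
`m` of the open unit ball. -/
theorem integral_poisson_kernel_eq_volume_sphere {n : ℕ}
    (m : EuclideanSpace ℝ (Fin (n + 1))) (hm : ‖m‖ < 1) :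
    ∫ ξ : Metric.sphere (0 : EuclideanSpace ℝ (Fin (n + 1))) 1,
        ((1 - ‖m‖ ^ 2) / ‖m - (ξ : EuclideanSpace ℝ (Fin (n + 1)))‖ ^ 2) ^ n
        ∂((volume : Measure (EuclideanSpace ℝ (Fin (n + 1)))).toSphere)
      = ((volume : Measure (EuclideanSpace ℝ (Fin (n + 1)))).toSphere Set.univ).toReal := by
  have hm' : 0 < 1 - ‖m‖ ^ 2 := by nlinarith [norm_nonneg m]
  set c : ℝ := (1 + ‖m‖ ^ 2) / (1 - ‖m‖ ^ 2) with hc_def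
  set w := (-2 / (1 - ‖m‖ ^ 2)) • m with hw_def
  have hc : 1 ≤ c := by
    rw [hc_def, one_le_div hm']
    nlinarith [sq_nonneg ‖m‖]
  have hw : ‖w‖ ^ 2 = c ^ 2 - 1 := by
    rw [hw_def, hc_def, norm_smul, mul_pow, Real.norm_eq_abs, sq_abs]
    field_simp
    ring
  have hkernel (ξ : Metric.sphere (0 : EuclideanSpace ℝ (Fin (n + 1))) 1) :
      (1 - ‖m‖ ^ 2) / ‖m - ξ.1‖ ^ 2 = (boostTime c w ξ.1)⁻¹ := by
    have hξ : ‖ξ.1‖ = 1 := by simp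
    rw [← inv_div, norm_sub_sq_real, boostTime, hξ, hw_def, inner_smul_left, hc_def]
    congr 1
    simp only [conj_trivial]
    field_simp
    ring
  have hnonneg (ξ : Metric.sphere (0 : EuclideanSpace ℝ (Fin (n + 1))) 1) :
      0 ≤ (boostTime c w ξ.1)⁻¹ ^ n :=
    pow_nonneg (inv_nonneg.2 (boostTime_nonneg hc hw _)) n
  have hmeas : Measurable fun ξ : Metric.sphere (0 : EuclideanSpace ℝ (Fin (n + 1))) 1 ↦
      (boostTime c w ξ.1)⁻¹ ^ n := by
    have h : Measurable (boostTime c w) := (continuous_boostTime c w).measurable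
    fun_prop
  simp_rw [hkernel]
  rw [integral_eq_lintegral_of_nonneg_ae (.of_forall hnonneg) hmeas.aestronglyMeasurable,
    ← lintegral_inv_boostTime_pow_toSphere volume hc hw]
  simp
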